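/- Let K be a field of characteristic zero and w ∈ S_n. The vanishing ideal I(Y_w^∘) in K[x_γ : γ ∈ Δ⁺] is a homogeneous ideal (i.e., contains every homogeneous component of each of its elements; equivalently, the Zariski closure Y_w is a cone with center at the origin) if and only if w = w_D for some basic subset D ⊆ Δ⁺. -/

import Mathlib

/-- A positive root `(i,j)`: `n ≥ i > j ≥ 1`. -/
def IsPosRoot (n : ℕ) (γ : ℕ × ℕ) : Prop := 1 ≤ γ.2 ∧ γ.2 < γ.1 ∧ γ.1 ≤ n

/-- `γ` is the sum of the roots `α` and `β` (in either order):
`(i,j) + (j,k) = (i,k)`. -/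
def RootSum (α β γ : ℕ × ℕ) : Prop :=
  (α.2 = β.1 ∧ γ = (α.1, β.2)) ∨ (β.2 = α.1 ∧ γ = (β.1, α.2))

/-- A basic subset: a set of positive roots with at most one root in each
row and at most one root in each column. -/
def IsBasic (n : ℕ) (D : Set (ℕ × ℕ)) : Prop :=
  (∀ γ ∈ D, IsPosRoot n γ) ∧
  (∀ α ∈ D, ∀ β ∈ D, α.1 = β.1 → α = β) ∧
  (∀ α ∈ D, ∀ β ∈ D, α.2 = β.2 → α = β)

/-- A positive root `α` is `D`-singular if `α + β ∈ D` for some positive root `β`. -/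
def IsSingular (n : ℕ) (D : Set (ℕ × ℕ)) (α : ℕ × ℕ) : Prop :=
  IsPosRoot n α ∧ ∃ β γ, IsPosRoot n β ∧ RootSum α β γ ∧ γ ∈ D

/-- `M(D) = R(D) \ D`, where `R(D)` is the set of `D`-regular positive roots. -/
def MD (n : ℕ) (D : Set (ℕ × ℕ)) : Set (ℕ × ℕ) :=
  {γ | IsPosRoot n γ ∧ ¬ IsSingular n D γ ∧ γ ∉ D}
/-- The list `[w_D(1), …, w_D(j)]`, defined recursively: `w_D(j)` is the
greatest `i ∈ {1,…,n}` with `(i,j) ∉ M(D)` and `i ∉ {w_D(1),…,w_D(j-1)}`. -/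
noncomputable def wDVals (n : ℕ) (D : Set (ℕ × ℕ)) : ℕ → List ℕ
  | 0 => []
  | j + 1 =>
    let prev := wDVals n D j
    prev ++ [sSup {i | 1 ≤ i ∧ i ≤ n ∧ (i, j + 1) ∉ MD n D ∧ i ∉ prev}]

/-- The permutation `w_D` associated with a basic subset `D` (as a map `ℕ → ℕ`,
meaningful on `{1,…,n}`). -/
noncomputable def wD (n : ℕ) (D : Set (ℕ × ℕ)) (j : ℕ) : ℕ :=
  ((wDVals n D j).getLast?).getD 0
open scoped Classical

/-- The variable set `{x_γ : γ ∈ Δ⁺}`: positive roots of `Δ⁺`. -/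
abbrev PRoot (n : ℕ) : Type := {γ : ℕ × ℕ // IsPosRoot n γ}

/-- A point `v : Δ⁺ → K` of `𝔫₋` realized as a strictly lower triangular
matrix (`1`-based roots, `0`-based matrix indices). -/
noncomputable def matOf (n : ℕ) (K : Type) [Field K] (v : PRoot n → K) :
    Matrix (Fin n) (Fin n) K :=
  fun a b =>
    if h : IsPosRoot n ((a : ℕ) + 1, (b : ℕ) + 1) then v ⟨((a : ℕ) + 1, (b : ℕ) + 1), h⟩
    else 0

/-- The point of `𝔫₋` given by the strictly lower triangular entries of a
matrix. -/
noncomputable def vecOf (n : ℕ) (K : Type) [Field K] (A : Matrix (Fin n) (Fin n) K)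
    (γ : PRoot n) : K :=
  A ⟨γ.1.1 - 1, by obtain ⟨h1, h2, h3⟩ := γ.2; omega⟩
    ⟨γ.1.2 - 1, by obtain ⟨h1, h2, h3⟩ := γ.2; omega⟩

/-- `π`: the strictly lower triangular part of a matrix. -/
def lowerPart (n : ℕ) (K : Type) [Field K] (A : Matrix (Fin n) (Fin n) K) :
    Matrix (Fin n) (Fin n) K :=
  fun a b => if (b : ℕ) < (a : ℕ) then A a b else 0

/-- Membership in `N = UT(n,K)`: upper triangular with units on the diagonal. -/
def IsUni (n : ℕ) (K : Type) [Field K] (g : Matrix (Fin n) (Fin n) K) : Prop :=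
  (∀ i : Fin n, g i i = 1) ∧ ∀ i j : Fin n, j < i → g i j = 0

/-- The element `X_{D,φ} = Σ_{ξ ∈ D} φ(ξ) E_ξ` of `𝔫₋`. -/
noncomputable def XDphi (n : ℕ) (K : Type) [Field K] (D : Set (ℕ × ℕ)) (φ : ℕ × ℕ → K) :
    Matrix (Fin n) (Fin n) K :=
  fun a b => if ((a : ℕ) + 1, (b : ℕ) + 1) ∈ D then φ ((a : ℕ) + 1, (b : ℕ) + 1) else 0

/-- The basic variety `V_{D,φ} = {π(g X_{D,φ} h) : g, h ∈ N}`, as a set of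
points of `𝔫₋`. -/
noncomputable def VDvar (n : ℕ) (K : Type) [Field K] (D : Set (ℕ × ℕ)) (φ : ℕ × ℕ → K) :
    Set (PRoot n → K) :=
  {v | ∃ g h : Matrix (Fin n) (Fin n) K, IsUni n K g ∧ IsUni n K h ∧
    v = vecOf n K (lowerPart n K (g * XDphi n K D φ * h))}

/-- The basic cell `V_D^∘ = ⋃_φ V_{D,φ}`, over all `φ : D → K ∖ {0}`. -/
noncomputable def VDcell (n : ℕ) (K : Type) [Field K] (D : Set (ℕ × ℕ)) :
    Set (PRoot n → K) :=
  {v | ∃ φ : ℕ × ℕ → K, (∀ γ ∈ D, φ γ ≠ 0) ∧ v ∈ VDvar n K D φ}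

/-- The vanishing ideal `I(S)` of a set of points `S`. -/
noncomputable def vanishing (σ K : Type) [Field K] (S : Set (σ → K)) :
    Ideal (MvPolynomial σ K) where
  carrier := {f | ∀ v ∈ S, MvPolynomial.eval v f = 0}
  add_mem' := by
    intro a b ha hb v hv
    simp [map_add, ha v hv, hb v hv]
  zero_mem' := by intro v hv; simp
  smul_mem' := by
    intro c f hf v hv
    simp [smul_eq_mul, hf v hv]
/-- Membership in the Borel subgroup `B` of invertible upper triangular matrices. -/
def InBorel {n : ℕ} {R : Type} [CommRing R] (b : Matrix (Fin n) (Fin n) R) : Prop :=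
  IsUnit b.det ∧ ∀ i j : Fin n, j < i → b i j = 0

/-- The permutation matrix `ẇ` of `w ∈ S_n`. -/
def permMat (n : ℕ) (K : Type) [Field K] (w : Equiv.Perm (Fin n)) :
    Matrix (Fin n) (Fin n) K :=
  fun a b => if a = w b then 1 else 0

/-- `Y_w^∘ = {X ∈ 𝔫₋ : 1 + X ∈ B ẇ B}`, as a set of points of `𝔫₋`. -/
noncomputable def YwCell (n : ℕ) (K : Type) [Field K] (w : Equiv.Perm (Fin n)) :
    Set (PRoot n → K) :=
  {v | ∃ b₁ b₂ : Matrix (Fin n) (Fin n) K, InBorel b₁ ∧ InBorel b₂ ∧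
    1 + matOf n K v = b₁ * permMat n K w * b₂}

/-!
By Bruhat decomposition, the ranks of the lower left corners of `1 + X` determine the cell in which
`X` lies, and `w` is of the form `w_D` if and only if there are no `j < k` with `w j < w k ≤ j`.

Let `w` avoid this pattern and let `X` lie in `Y_w^∘`. The corners of `1 + s X` on and below the
diagonal are those of `1 + X` up to the scalar `s ≠ 0`. The rank of a corner above the diagonal can
only drop at finitely many `s`, and avoidance makes it as large as the diagonal corners permit, so
that it cannot grow. Hence `s X ∈ Y_w^∘` for all but finitely many `s`, and the homogeneous
components of a polynomial vanishing on the cell vanish on it.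

Conversely, let the ideal be homogeneous and `1 + X = b ẇ c`. Then `s X` lies in the closure of the
cell for every `s`, so the bounds on the corner ranks hold for
`1 + s X = b (s ẇ + (1 - s) b⁻¹ c⁻¹) c`. To first order at `s = 1` they give
`(b⁻¹ c⁻¹) (w k) j = 0` whenever `j < k` and `w j < w k`. If moreover `w k ≤ j`, then a sufficiently
general `b`, with `c` given by the LU factorization of `b ẇ`, violates this equation.
-/

namespace InBorel

open Matrix

variable {n : ℕ} {R K : Type} [CommRing R] [Field K]

theorem isUpperTriangular {b : Matrix (Fin n) (Fin n) R} (hb : InBorel b) : b.IsUpperTriangular :=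
  fun i j h => hb.2 i j h

theorem mul {b c : Matrix (Fin n) (Fin n) R} (hb : InBorel b) (hc : InBorel c) :
    InBorel (b * c) :=
  ⟨det_mul b c ▸ hb.1.mul hc.1, fun _ _ h => hb.isUpperTriangular.mul hc.isUpperTriangular h⟩

theorem inv {b : Matrix (Fin n) (Fin n) R} (hb : InBorel b) : InBorel b⁻¹ := by
  have := invertibleOfIsUnitDet b hb.1
  exact ⟨isUnit_nonsing_inv_det_iff.mpr hb.1,
    fun i j h => blockTriangular_inv_of_blockTriangular hb.isUpperTriangular h⟩

theorem of_apply_self_ne_zero {b : Matrix (Fin n) (Fin n) K} (hb : b.IsUpperTriangular)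
    (hdiag : ∀ i, b i i ≠ 0) : InBorel b := by
  refine ⟨?_, fun i j h => hb h⟩
  rw [det_of_isUpperTriangular hb]
  exact (Finset.prod_ne_zero_iff.mpr fun i _ => hdiag i).isUnit

theorem apply_self_ne_zero {b : Matrix (Fin n) (Fin n) K} (hb : InBorel b) (i : Fin n) :
    b i i ≠ 0 := by
  have h := hb.1.ne_zero
  rw [det_of_isUpperTriangular hb.isUpperTriangular] at h
  exact Finset.prod_ne_zero_iff.mp h i (Finset.mem_univ i)

end InBorel

namespace BruhatCone

open Matrix

/-! ### Rank and homogeneity -/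

section Rank

variable {K : Type*} [Field K] {m n ι : Type*} [Fintype n] [Fintype ι] [DecidableEq ι]

theorem rank_add_le (A B : Matrix m n K) : (A + B).rank ≤ A.rank + B.rank := by
  have h : LinearMap.range (A + B).mulVecLin ≤
      LinearMap.range A.mulVecLin ⊔ LinearMap.range B.mulVecLin := by
    rintro _ ⟨z, rfl⟩
    rw [mulVecLin_add, LinearMap.add_apply]
    exact Submodule.add_mem_sup ⟨z, rfl⟩ ⟨z, rfl⟩
  exact (Submodule.finrank_mono h).trans (Submodule.finrank_add_le_finrank_add_finrank _ _)

theorem finite_setOf_det_add_smul_eq_zero (A B : Matrix ι ι K) {s₀ : K}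
    (h : (A + s₀ • B).det ≠ 0) : {s : K | (A + s • B).det = 0}.Finite := by
  let p : Polynomial K :=
    (A.map Polynomial.C + (Polynomial.X : Polynomial K) • B.map Polynomial.C).det
  have hp (s : K) : p.eval s = (A + s • B).det := by
    rw [← Polynomial.coe_evalRingHom, RingHom.map_det]
    congr 1
    ext x y
    simp [mul_comm s]
  have hp₀ : p ≠ 0 := fun hp₀ => h (by rw [← hp, hp₀, Polynomial.eval_zero])
  exact (Polynomial.finite_setOfPred_isRoot hp₀).subset fun s hs => (hp s).trans hs

/- If `U i j ≠ 0`, then to first order at `s = 1` the minor of `s • A + (1 - s) • U` on the rows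
`ρ, i` and the columns `γ, j` is `(1 - s) * U i j`. -/
theorem apply_eq_zero_of_rank_le [Infinite K] {A U : Matrix m n K} {ρ : ι → m} {γ : ι → n}
    {i : m} {j : n} (hA : A.submatrix ρ γ = 1) (hrow : ∀ y, A i (γ y) = 0)
    (hcol : ∀ x, A (ρ x) j = 0) (hij : A i j = 0)
    (hrank : ∀ s : K, (s • A + (1 - s) • U).rank ≤ Fintype.card ι) : U i j = 0 := by
  let ρ' : ι ⊕ Unit → m := Sum.elim ρ fun _ => i
  let γ' : ι ⊕ Unit → n := Sum.elim γ fun _ => j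
  let N : Matrix (ι ⊕ Unit) (ι ⊕ Unit) K := U.submatrix ρ' γ'
  let N' : Matrix (ι ⊕ Unit) (ι ⊕ Unit) K := of (Sum.elim (fun x y => (A - U) (ρ x) (γ' y)) 0)
  have hfactor (s : K) : (s • A + (1 - s) • U).submatrix ρ' γ' =
      diagonal (Sum.elim (fun _ => 1) fun _ => 1 - s) * (N + s • N') := by
    ext (x | x) y
    · simp only [N, N', ρ', diagonal_mul, submatrix_apply, of_apply, Matrix.add_apply,
        Matrix.smul_apply, Matrix.sub_apply, smul_eq_mul, Sum.elim_inl]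
      ring
    · have hA' : A i (γ' y) = 0 := by cases y <;> simp [γ', hrow, hij]
      simp [N, N', ρ', hA']
  have hdet (s : K) (hs : s ≠ 1) : (N + s • N').det = 0 := by
    by_contra hne
    have hne' : ((s • A + (1 - s) • U).submatrix ρ' γ').det ≠ 0 := by
      simpa [hfactor, det_mul, Fintype.prod_sum_type, sub_eq_zero, hne] using hs.symm
    have hcard := (rank_of_det_ne_zero hne').symm.trans_le (rank_submatrix_le _ ρ' γ')
    have := hrank s
    simp only [Fintype.card_sum, Fintype.card_unit] at hcard
    omega
  have hone : N + (1 : K) • N' =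
      fromBlocks 1 0 (of fun _ y => U i (γ y)) (of fun _ _ => U i j) := by
    rw [← hA]
    ext (x | x) (y | y) <;> simp [N, N', ρ', γ', hcol]
  by_contra hU
  have hfin := finite_setOf_det_add_smul_eq_zero N N' (s₀ := 1)
    (by rw [hone, det_fromBlocks_zero₁₂]; simpa using hU)
  exact (Set.finite_singleton (1 : K)).infinite_compl (hfin.subset hdet)

theorem exists_mul_mul_eq_one [Fintype m] (M : Matrix m n K) :
    ∃ (P : Matrix (Fin M.rank) m K) (Q : Matrix n (Fin M.rank) K), P * M * Q = 1 := by
  let e : LinearMap.range M.mulVecLin ≃ₗ[K] (Fin M.rank → K) :=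
    LinearEquiv.ofFinrankEq _ _ (Module.finrank_fin_fun K).symm
  obtain ⟨p, hp⟩ := (LinearMap.range M.mulVecLin).subtype.exists_leftInverse_of_injective
    (Submodule.ker_subtype _)
  obtain ⟨q, hq⟩ := M.mulVecLin.rangeRestrict.exists_rightInverse_of_surjective
    M.mulVecLin.range_rangeRestrict
  refine ⟨(e.toLinearMap ∘ₗ p).toMatrix', (q ∘ₗ e.symm.toLinearMap).toMatrix', ?_⟩
  refine toLin'.injective (LinearMap.ext fun z => ?_)
  have hMq : M *ᵥ q (e.symm z) = (LinearMap.range M.mulVecLin).subtype (e.symm z) :=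
    congrArg Subtype.val (LinearMap.congr_fun hq (e.symm z))
  simp only [toLin'_mul, toLin'_toMatrix', LinearMap.comp_apply, LinearEquiv.coe_coe,
    toLin'_apply, toLin'_one, LinearMap.id_apply, hMq]
  rw [← LinearMap.comp_apply, hp, LinearMap.id_apply, e.apply_symm_apply]

theorem card_le_rank_of_det_mul_mul_ne_zero [Fintype m] {P : Matrix ι m K}
    {M : Matrix m n K} {Q : Matrix n ι K} (h : (P * M * Q).det ≠ 0) : Fintype.card ι ≤ M.rank :=
  calc Fintype.card ι = (P * M * Q).rank := (rank_of_det_ne_zero h).symm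
    _ ≤ (P * M).rank := rank_mul_le_left _ _
    _ ≤ M.rank := rank_mul_le_right _ _

theorem finite_setOf_rank_add_smul_lt [Finite m] (A B : Matrix m n K) (s₀ : K) :
    {s : K | (A + s • B).rank < (A + s₀ • B).rank}.Finite := by
  have := Fintype.ofFinite m
  obtain ⟨P, Q, hPQ⟩ := exists_mul_mul_eq_one (A + s₀ • B)
  have hline (s : K) : P * (A + s • B) * Q = P * A * Q + s • (P * B * Q) := by
    simp only [Matrix.mul_add, Matrix.add_mul, Matrix.mul_smul, Matrix.smul_mul]
  refine (finite_setOf_det_add_smul_eq_zero (P * A * Q) (P * B * Q) (s₀ := s₀) ?_).subset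
    fun s hs => ?_
  · rw [← hline, hPQ, det_one]
    exact one_ne_zero
  · by_contra hdet
    have hdet : (P * (A + s • B) * Q).det ≠ 0 := by rwa [hline]
    exact hs.not_ge (by simpa using card_le_rank_of_det_mul_mul_ne_zero hdet)

end Rank

section Homogeneous

open MvPolynomial

variable {σ R : Type*} [CommSemiring R]

theorem eval_smul_of_isHomogeneous {f : MvPolynomial σ R} {d : ℕ} (hf : f.IsHomogeneous d)
    (v : σ → R) (s : R) : eval (s • v) f = s ^ d * eval v f := by
  rw [eval_eq, eval_eq, Finset.mul_sum]
  refine Finset.sum_congr rfl fun m hm => ?_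
  have hdeg : d = ∑ x ∈ m.support, m x := by
    simpa [Finsupp.weight_apply, Finsupp.sum] using (hf (mem_support_iff.mp hm)).symm
  simp only [Pi.smul_apply, smul_eq_mul, mul_pow, Finset.prod_mul_distrib,
    Finset.prod_pow_eq_pow_sum, ← hdeg]
  ring

theorem eval_smul_eq_sum_eval_homogeneousComponent (f : MvPolynomial σ R) (v : σ → R) (s : R) :
    eval (s • v) f =
      ∑ d ∈ Finset.range (f.totalDegree + 1), s ^ d * eval v (homogeneousComponent d f) := by
  conv_lhs => rw [← sum_homogeneousComponent f, map_sum]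
  exact Finset.sum_congr rfl fun d _ =>
    eval_smul_of_isHomogeneous (homogeneousComponent_isHomogeneous d f) v s

variable {σ K : Type} [Field K]

theorem homogeneousComponent_mem_vanishing [Infinite K] {S : Set (σ → K)}
    (hS : ∀ v ∈ S, {s : K | s • v ∉ S}.Finite) {f : MvPolynomial σ K}
    (hf : f ∈ vanishing σ K S) (d : ℕ) : homogeneousComponent d f ∈ vanishing σ K S := by
  intro v hv
  let p : Polynomial K := ∑ e ∈ Finset.range (f.totalDegree + 1),
    Polynomial.monomial e (eval v (homogeneousComponent e f))
  have hroot (s : K) (hs : s • v ∈ S) : p.IsRoot s := by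
    rw [Polynomial.IsRoot.def, ← hf _ hs, eval_smul_eq_sum_eval_homogeneousComponent]
    simp only [p, Polynomial.eval_finsetSum, Polynomial.eval_monomial, mul_comm]
  have hp : p = 0 := Polynomial.eq_zero_of_infinite_isRoot p
    ((hS v hv).infinite_compl.mono fun s hs => hroot s (not_not.mp hs))
  by_cases hd : d ∈ Finset.range (f.totalDegree + 1)
  · simpa [p, Polynomial.finsetSum_coeff, Polynomial.coeff_monomial, hd] using
      congrArg (Polynomial.coeff · d) hp
  · rw [homogeneousComponent_eq_zero _ _ (by simpa using hd), map_zero]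

theorem eval_smul_eq_zero_of_homogeneousComponent_mem {S : Set (σ → K)} {f : MvPolynomial σ K}
    (hf : ∀ d, homogeneousComponent d f ∈ vanishing σ K S) {v : σ → K} (hv : v ∈ S) (s : K) :
    eval (s • v) f = 0 := by
  rw [eval_smul_eq_sum_eval_homogeneousComponent]
  exact Finset.sum_eq_zero fun d _ => by rw [hf d v hv, mul_zero]

end Homogeneous

/-! ### The Bruhat cells and the ranks of corners -/

section Corner

variable {n : ℕ} {K : Type} [Field K]

theorem mul_permMat (A : Matrix (Fin n) (Fin n) K) (w : Equiv.Perm (Fin n)) :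
    A * permMat n K w = A.submatrix id w := by
  have h : permMat n K w = (1 : Matrix (Fin n) (Fin n) K).submatrix id w := by
    ext a b
    simp [permMat, one_apply]
  rw [h]
  exact mul_submatrix_one (Equiv.refl _) _ _

theorem permMat_symm_mul_permMat (w : Equiv.Perm (Fin n)) :
    permMat n K w.symm * permMat n K w = 1 := by
  ext a b
  simp [mul_permMat, permMat, one_apply]

theorem isUnit_det_permMat (w : Equiv.Perm (Fin n)) : IsUnit (permMat n K w).det :=
  isUnit_det_of_left_inverse (permMat_symm_mul_permMat w)

/-- The lower left corner of `g`, on the rows with index at least `i` and the columns with index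
less than `j`, padded with zeros to an `n × n` matrix. -/
def corner (g : Matrix (Fin n) (Fin n) K) (i j : ℕ) : Matrix (Fin n) (Fin n) K :=
  of fun a b => if i ≤ (a : ℕ) ∧ (b : ℕ) < j then g a b else 0

theorem corner_apply (g : Matrix (Fin n) (Fin n) K) (i j : ℕ) (a b : Fin n) :
    corner g i j a b = if i ≤ (a : ℕ) ∧ (b : ℕ) < j then g a b else 0 :=
  rfl

theorem corner_add (A B : Matrix (Fin n) (Fin n) K) (i j : ℕ) :
    corner (A + B) i j = corner A i j + corner B i j := by
  ext a b
  simp only [corner_apply, Matrix.add_apply]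
  split_ifs <;> simp

theorem corner_smul (s : K) (A : Matrix (Fin n) (Fin n) K) (i j : ℕ) :
    corner (s • A) i j = s • corner A i j := by
  ext a b
  simp [corner_apply]

theorem corner_upper_mul {b : Matrix (Fin n) (Fin n) K} (hb : b.IsUpperTriangular)
    (g : Matrix (Fin n) (Fin n) K) (i j : ℕ) :
    corner (b * g) i j = corner b i n * corner g i j := by
  ext x y
  by_cases hxy : i ≤ (x : ℕ) ∧ (y : ℕ) < j
  · rw [corner_apply, if_pos hxy, mul_apply, mul_apply]
    refine Finset.sum_congr rfl fun k _ => ?_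
    by_cases hk : i ≤ (k : ℕ)
    · simp [corner_apply, hxy, hk]
    · rw [corner_apply, if_pos ⟨hxy.1, k.2⟩, hb (show k < x by rw [Fin.lt_def]; omega), zero_mul,
        zero_mul]
  · rw [corner_apply, if_neg hxy, mul_apply]
    refine (Finset.sum_eq_zero fun k _ => ?_).symm
    simp only [corner_apply]
    grind

theorem corner_mul_upper {c : Matrix (Fin n) (Fin n) K} (hc : c.IsUpperTriangular)
    (g : Matrix (Fin n) (Fin n) K) (i j : ℕ) :
    corner (g * c) i j = corner g i j * corner c 0 j := by
  ext x y
  by_cases hxy : i ≤ (x : ℕ) ∧ (y : ℕ) < j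
  · rw [corner_apply, if_pos hxy, mul_apply, mul_apply]
    refine Finset.sum_congr rfl fun k _ => ?_
    by_cases hk : (k : ℕ) < j
    · simp [corner_apply, hxy, hk]
    · rw [corner_apply c, if_pos ⟨Nat.zero_le _, hxy.2⟩,
        hc (show y < k by rw [Fin.lt_def]; omega), mul_zero, mul_zero]
  · rw [corner_apply, if_neg hxy, mul_apply]
    refine (Finset.sum_eq_zero fun k _ => ?_).symm
    simp only [corner_apply]
    grind

theorem rank_corner_upper_mul_upper_le {b c : Matrix (Fin n) (Fin n) K} (hb : b.IsUpperTriangular)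
    (hc : c.IsUpperTriangular) (g : Matrix (Fin n) (Fin n) K) (i j : ℕ) :
    (corner (b * g * c) i j).rank ≤ (corner g i j).rank := by
  rw [corner_mul_upper hc, corner_upper_mul hb]
  exact (rank_mul_le_left _ _).trans (rank_mul_le_right _ _)

theorem rank_corner_borel_mul_borel {b c : Matrix (Fin n) (Fin n) K} (hb : InBorel b)
    (hc : InBorel c) (g : Matrix (Fin n) (Fin n) K) (i j : ℕ) :
    (corner (b * g * c) i j).rank = (corner g i j).rank := by
  refine (rank_corner_upper_mul_upper_le hb.2 hc.2 g i j).antisymm ?_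
  have hg : b⁻¹ * (b * g * c) * c⁻¹ = g := by
    rw [Matrix.mul_assoc b, nonsing_inv_mul_cancel_left _ _ hb.1,
      mul_nonsing_inv_cancel_right _ _ hc.1]
  simpa only [hg] using rank_corner_upper_mul_upper_le hb.inv.2 hc.inv.2 (b * g * c) i j

theorem card_filter_val_mem_Ico {a b : ℕ} (hb : b ≤ n) :
    (Finset.univ.filter fun k : Fin n => a ≤ (k : ℕ) ∧ (k : ℕ) < b).card = b - a := by
  rw [← Nat.card_Ico, ← Finset.card_map Fin.valEmbedding]
  congr 1
  ext x
  simp only [Finset.mem_map, Finset.mem_filter, Finset.mem_univ, true_and, Fin.valEmbedding_apply,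
    Finset.mem_Ico]
  exact ⟨fun ⟨_, hk, h⟩ => h ▸ hk, fun h => ⟨⟨x, by omega⟩, h, rfl⟩⟩

theorem rank_corner_le_add_rank_corner_diagonal (g : Matrix (Fin n) (Fin n) K) {i m j : ℕ}
    (him : i ≤ m) (hmj : m ≤ j) (hj : j ≤ n) :
    (corner g i j).rank ≤ (m - i) + (j - m) + (corner g m m).rank := by
  let rows : Matrix (Fin n) (Fin n) K := of fun a b => if (a : ℕ) < m then corner g i j a b else 0
  let cols : Matrix (Fin n) (Fin n) K :=
    of fun a b => if m ≤ (a : ℕ) ∧ m ≤ (b : ℕ) then corner g i j a b else 0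
  have hsplit : corner g i j = rows + cols + corner g m m := by
    ext a b
    simp only [rows, cols, Matrix.add_apply, of_apply, corner_apply]
    grind
  have hrows : rows.rank ≤ m - i := by
    rw [← card_filter_val_mem_Ico (n := n) (hmj.trans hj)]
    refine rank_le_card_of_support_subset _ _ (Function.support_subset_iff'.mpr fun a ha => ?_)
    ext b
    simp only [rows, row_apply, of_apply, corner_apply, Pi.zero_apply]
    grind
  have hcols : cols.rank ≤ j - m := by
    rw [← card_filter_val_mem_Ico (n := n) hj, ← rank_transpose]
    refine rank_le_card_of_support_subset _ _ (Function.support_subset_iff'.mpr fun b hb => ?_)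
    ext a
    simp only [cols, row_apply, transpose_apply, of_apply, corner_apply, Pi.zero_apply]
    grind
  rw [hsplit]
  have := rank_add_le (rows + cols) (corner g m m)
  have := rank_add_le rows cols
  omega

/-- The number of nonzero entries of the permutation matrix of `w` in the corner of rows with index
at least `i` and columns with index less than `j`. -/
def cornerCount (w : Equiv.Perm (Fin n)) (i j : ℕ) : ℕ :=
  (Finset.univ.filter fun k : Fin n => i ≤ (w k : ℕ) ∧ (k : ℕ) < j).card

theorem rank_corner_permMat (w : Equiv.Perm (Fin n)) (i j : ℕ) :
    (corner (permMat n K w) i j).rank = cornerCount w i j := by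
  have h : corner (permMat n K w) i j = permMat n K w *
      diagonal fun k : Fin n => if i ≤ (w k : ℕ) ∧ (k : ℕ) < j then (1 : K) else 0 := by
    ext a b
    rw [corner_apply, mul_diagonal, permMat]
    by_cases hab : a = w b <;> simp [hab]
  rw [h, rank_mul_eq_right_of_isUnit_det _ _ (isUnit_det_permMat w), rank_diagonal,
    Fintype.card_subtype, cornerCount]
  simp

theorem cornerCount_succ (w : Equiv.Perm (Fin n)) (i : ℕ) (k : Fin n) :
    cornerCount w i (k + 1) = cornerCount w i k + if i ≤ (w k : ℕ) then 1 else 0 := by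
  have h : (Finset.univ.filter fun l : Fin n => i ≤ (w l : ℕ) ∧ (l : ℕ) < k + 1) =
      (Finset.univ.filter fun l : Fin n => i ≤ (w l : ℕ) ∧ (l : ℕ) < k) ∪
        if i ≤ (w k : ℕ) then {k} else ∅ := by
    ext l
    split_ifs <;> grind
  rw [cornerCount, h, Finset.card_union_of_disjoint, cornerCount]
  · split_ifs <;> simp
  · split_ifs <;> simp

theorem eq_of_cornerCount_eq {w w' : Equiv.Perm (Fin n)}
    (h : ∀ i ≤ n, ∀ j ≤ n, cornerCount w i j = cornerCount w' i j) : w = w' := by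
  have hiff (k i : Fin n) : (i : ℕ) ≤ w k ↔ (i : ℕ) ≤ w' k := by
    have hsucc := h i i.2.le (k + 1) k.2
    rw [cornerCount_succ, cornerCount_succ, h i i.2.le k k.2.le] at hsucc
    grind
  ext k
  exact le_antisymm ((hiff k (w k)).mp le_rfl) ((hiff k (w' k)).mpr le_rfl)

end Corner

section Bruhat

variable {n : ℕ} {K : Type} [Field K]

/- Among the vectors of `e_k + span {e_l | l < k}`, take one whose image under `g` has its last
nonzero entry as high as possible. -/
theorem exists_reduced_column {g : Matrix (Fin n) (Fin n) K} (hg : IsUnit g.det) (k : Fin n) :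
    ∃ (z : Fin n → K) (r : Fin n), z k = 1 ∧ (∀ l, k < l → z l = 0) ∧
      (g *ᵥ z) r ≠ 0 ∧ (∀ a, r < a → (g *ᵥ z) a = 0) ∧
      ∀ y : Fin n → K, y k = 1 → (∀ l, k < l → y l = 0) → ∃ a, r ≤ a ∧ (g *ᵥ y) a ≠ 0 := by
  have hexists (y : Fin n → K) (hyk : y k = 1) :
      ∃ r, (g *ᵥ y) r ≠ 0 ∧ ∀ a, r < a → (g *ᵥ y) a = 0 := by
    have hy : g *ᵥ y ≠ 0 := fun h => by
      simp [eq_zero_of_mulVec_eq_zero hg.ne_zero h] at hyk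
    obtain ⟨a, ha⟩ := Function.ne_iff.mp hy
    obtain ⟨r, hr, hmax⟩ := (Set.toFinite {a | (g *ᵥ y) a ≠ 0}).exists_maximal ⟨a, ha⟩
    exact ⟨r, hr, fun a hra => not_not.mp fun ha => (hmax ha hra.le).not_gt hra⟩
  let heights : Set (Fin n) := {r | ∃ z : Fin n → K, z k = 1 ∧ (∀ l, k < l → z l = 0) ∧
    (g *ᵥ z) r ≠ 0 ∧ ∀ a, r < a → (g *ᵥ z) a = 0}
  have hne : heights.Nonempty := by
    obtain ⟨r, hr⟩ := hexists (Pi.single k 1) (Pi.single_eq_same k 1)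
    exact ⟨r, _, Pi.single_eq_same k 1, fun l hl => Pi.single_eq_of_ne hl.ne' 1, hr⟩
  obtain ⟨r, ⟨z, hzk, hz, hr, hra⟩, hmin⟩ := (Set.toFinite heights).exists_minimal hne
  refine ⟨z, r, hzk, hz, hr, hra, fun y hyk hy => ?_⟩
  obtain ⟨a, ha⟩ := hexists y hyk
  exact ⟨a, le_of_not_gt fun har => (hmin ⟨y, hyk, hy, ha⟩ har.le).not_gt har, ha.1⟩

theorem exists_bruhat_decomposition {g : Matrix (Fin n) (Fin n) K} (hg : IsUnit g.det) :
    ∃ (w : Equiv.Perm (Fin n)) (b c : Matrix (Fin n) (Fin n) K),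
      InBorel b ∧ InBorel c ∧ g = b * permMat n K w * c := by
  choose z r hzk hz hr hra hmin using exists_reduced_column hg
  have hlt (j k : Fin n) (hjk : j < k) : r j ≠ r k := by
    intro hrjk
    let t := (g *ᵥ z k) (r k) / (g *ᵥ z j) (r j)
    obtain ⟨a, hra', ha⟩ := hmin k (z k - t • z j) (by simp [hzk, hz j k hjk])
      fun l hl => by simp [hz k l hl, hz j l (hjk.trans hl)]
    refine ha ?_
    simp only [mulVec_sub, mulVec_smul, Pi.sub_apply, Pi.smul_apply, smul_eq_mul]
    rcases hra'.eq_or_lt with rfl | hlt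
    · rw [← hrjk, div_mul_cancel₀ _ (hr j), hrjk, sub_self]
    · rw [hra k a hlt, hra j a (hrjk ▸ hlt), mul_zero, sub_zero]
  have hinj : Function.Injective r := fun j k hjk => by
    rcases lt_trichotomy j k with h | h | h
    exacts [absurd hjk (hlt j k h), h, absurd hjk.symm (hlt k j h)]
  let w : Equiv.Perm (Fin n) := Equiv.ofBijective r (Finite.injective_iff_bijective.mp hinj)
  let c : Matrix (Fin n) (Fin n) K := of fun l k => z k l
  have hc : InBorel c := .of_apply_self_ne_zero (fun l k hkl => hz k l hkl)
    fun k => by simp [c, hzk]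
  have hb : InBorel (g * c * permMat n K w.symm) := by
    have hentry (a k : Fin n) : (g * c * permMat n K w.symm) a k = (g *ᵥ z (w.symm k)) a := by
      rw [mul_permMat]
      rfl
    refine .of_apply_self_ne_zero (fun a k hka => ?_) fun k => ?_
    · rw [hentry]
      exact hra _ a ((w.apply_symm_apply k).trans_lt hka)
    · rw [hentry]
      nth_rw 2 [← w.apply_symm_apply k]
      exact hr (w.symm k)
  refine ⟨w, _, c⁻¹, hb, hc.inv, ?_⟩
  rw [Matrix.mul_assoc (g * c), permMat_symm_mul_permMat, Matrix.mul_one,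
    mul_nonsing_inv_cancel_right _ _ hc.1]

theorem matOf_apply_of_le (v : PRoot n → K) {a b : Fin n} (h : a ≤ b) : matOf n K v a b = 0 := by
  rw [matOf, dif_neg]
  rintro ⟨-, hlt, -⟩
  simp only at hlt
  omega

theorem matOf_smul (s : K) (v : PRoot n → K) : matOf n K (s • v) = s • matOf n K v := by
  ext a b
  simp only [matOf, Matrix.smul_apply, Pi.smul_apply]
  split_ifs <;> simp

theorem det_one_add_matOf (v : PRoot n → K) : (1 + matOf n K v).det = 1 := by
  rw [det_of_isLowerTriangular _ fun a b (hab : a < b) => by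
    simp [one_apply_ne hab.ne, matOf_apply_of_le v hab.le]]
  exact Finset.prod_eq_one fun a _ => by simp [matOf_apply_of_le v le_rfl]

theorem mem_YwCell_iff_rank_corner {w : Equiv.Perm (Fin n)} {v : PRoot n → K} :
    v ∈ YwCell n K w ↔
      ∀ i ≤ n, ∀ j ≤ n, (corner (1 + matOf n K v) i j).rank = cornerCount w i j := by
  constructor
  · rintro ⟨b, c, hb, hc, hv⟩ i - j -
    rw [hv, rank_corner_borel_mul_borel hb hc, rank_corner_permMat]
  · intro h
    obtain ⟨w', b, c, hb, hc, hv⟩ :=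
      exists_bruhat_decomposition (g := 1 + matOf n K v) (by simp [det_one_add_matOf])
    have hw : w' = w := eq_of_cornerCount_eq fun i hi j hj => by
      rw [← h i hi j hj, hv, rank_corner_borel_mul_borel hb hc, rank_corner_permMat]
    exact ⟨b, c, hb, hc, hw ▸ hv⟩

end Bruhat

/-! ### Homogeneous cells of avoiding permutations -/

section Avoids

variable {n : ℕ}

/-- There are no indices `j < k` with `w j < w k ≤ j`: the avoidance condition on a permutation that
characterizes the permutations `w_D`. -/
def Avoids (w : Equiv.Perm (Fin n)) : Prop :=
  ∀ j k : Fin n, j < k → w j < w k → j < w k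

theorem wD_succ (D : Set (ℕ × ℕ)) (j : ℕ) : wD n D (j + 1) =
    sSup {i | 1 ≤ i ∧ i ≤ n ∧ (i, j + 1) ∉ MD n D ∧ i ∉ wDVals n D j} := by
  simp [wD, wDVals]

theorem mem_wDVals_iff {D : Set (ℕ × ℕ)} {j i : ℕ} :
    i ∈ wDVals n D j ↔ ∃ l < j, i = wD n D (l + 1) := by
  induction j with
  | zero => simp [wDVals]
  | succ j ih =>
    rw [wDVals, List.mem_append, ih, List.mem_singleton, ← wD_succ]
    simp only [Nat.lt_succ_iff_lt_or_eq, or_and_right, exists_or, exists_eq_left]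

theorem mem_wDVals_iff_of_forall_lt {w : Equiv.Perm (Fin n)} {D : Set (ℕ × ℕ)} {j : Fin n}
    (h : ∀ l < j, (w l : ℕ) + 1 = wD n D (l + 1)) {k : Fin n} :
    (w k : ℕ) + 1 ∈ wDVals n D j ↔ k < j := by
  rw [mem_wDVals_iff]
  constructor
  · rintro ⟨l, hl, hlk⟩
    have hlj : (⟨l, hl.trans j.2⟩ : Fin n) < j := hl
    rw [← h _ hlj] at hlk
    rwa [w.injective (Fin.ext (Nat.succ_injective hlk))]
  · exact fun hkj => ⟨k, hkj, h k hkj⟩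

theorem avoids_of_eq_wD {w : Equiv.Perm (Fin n)} {D : Set (ℕ × ℕ)}
    (h : ∀ j : Fin n, (w j : ℕ) + 1 = wD n D (j + 1)) : Avoids w := by
  intro j k hjk hw
  by_contra hle
  have hmem : (w k : ℕ) + 1 ∈
      {i | 1 ≤ i ∧ i ≤ n ∧ (i, (j : ℕ) + 1) ∉ MD n D ∧ i ∉ wDVals n D j} := by
    refine ⟨by omega, (w k).2, fun hM => ?_, fun hV => ?_⟩
    · have hpos : (j : ℕ) + 1 < w k + 1 := hM.1.2.1
      omega
    · exact hjk.not_gt ((mem_wDVals_iff_of_forall_lt fun l _ => h l).mp hV)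
  have hsup := le_csSup ⟨n, fun i hi => hi.2.1⟩ hmem
  rw [← wD_succ, ← h j] at hsup
  omega

/-- The exceedances of `w`, i.e. the positions of the nonzero entries of the permutation matrix of
`w` strictly below the diagonal, as a set of (one-based) positive roots. -/
def exceedances (w : Equiv.Perm (Fin n)) : Set (ℕ × ℕ) :=
  {γ | ∃ k : Fin n, k < w k ∧ γ = ((w k : ℕ) + 1, (k : ℕ) + 1)}

theorem isBasic_exceedances (w : Equiv.Perm (Fin n)) : IsBasic n (exceedances w) := by
  refine ⟨?_, ?_, ?_⟩
  · rintro _ ⟨k, hk, rfl⟩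
    exact ⟨Nat.succ_pos _, Nat.succ_lt_succ hk, (w k).2⟩
  · rintro _ ⟨k, -, rfl⟩ _ ⟨l, -, rfl⟩ h
    rw [w.injective (Fin.ext (Nat.succ_injective h))]
  · rintro _ ⟨k, -, rfl⟩ _ ⟨l, -, rfl⟩ h
    rw [Fin.ext (Nat.succ_injective h)]

theorem notMem_MD_exceedances (w : Equiv.Perm (Fin n)) (j : Fin n) :
    ((w j : ℕ) + 1, (j : ℕ) + 1) ∉ MD n (exceedances w) :=
  fun h => h.2.2 ⟨j, Nat.lt_of_succ_lt_succ h.1.2.1, rfl⟩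

/- Neither `(w k, j)` nor the sum of it with a positive root is an exceedance: the only candidates
are in column `j`, where the exceedance is too high, or in row `w k`, where it is too far right. -/
theorem mem_MD_exceedances {w : Equiv.Perm (Fin n)} {j k : Fin n} (hjk : j < k) (hw : w j < w k)
    (hlt : j < w k) : ((w k : ℕ) + 1, (j : ℕ) + 1) ∈ MD n (exceedances w) := by
  refine ⟨⟨Nat.succ_pos _, Nat.succ_lt_succ hlt, (w k).2⟩, ?_, ?_⟩
  · rintro ⟨-, β, γ, hβ, ⟨hroot, rfl⟩ | ⟨hroot, rfl⟩, l, -, hl⟩ <;>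
      simp only [Prod.mk.injEq] at hroot hl
    · have hkl : k = l := w.injective (Fin.ext (Nat.succ_injective hl.1))
      have := hβ.2.1
      omega
    · have hjl : j = l := Fin.ext (Nat.succ_injective hl.2)
      have := hβ.2.1
      subst hjl
      omega
  · rintro ⟨l, -, hl⟩
    simp only [Prod.mk.injEq] at hl
    have hjl : j = l := Fin.ext (Nat.succ_injective hl.2)
    subst hjl
    omega

theorem eq_wD_exceedances_of_avoids {w : Equiv.Perm (Fin n)} (hw : Avoids w) (j : Fin n) :
    (w j : ℕ) + 1 = wD n (exceedances w) (j + 1) := by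
  induction j using WellFoundedLT.induction with
  | ind j ih =>
  rw [wD_succ]
  symm
  refine IsGreatest.csSup_eq ⟨⟨Nat.succ_pos _, (w j).2, notMem_MD_exceedances w j,
    mt (mem_wDVals_iff_of_forall_lt ih).mp (lt_irrefl j)⟩, ?_⟩
  rintro i ⟨hi, hin, hM, hV⟩
  by_contra! hlt
  obtain ⟨k, hk⟩ := w.surjective ⟨i - 1, by omega⟩
  obtain rfl : i = (w k : ℕ) + 1 := by rw [hk]; exact (Nat.sub_add_cancel hi).symm
  have hwjk : w j < w k := Nat.lt_of_succ_lt_succ hlt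
  have hjk : j < k := lt_of_le_of_ne (not_lt.mp (mt (mem_wDVals_iff_of_forall_lt ih).mpr hV))
    fun h => hwjk.ne (congrArg w h)
  exact hM (mem_MD_exceedances hjk hwjk (hw j k hjk hwjk))

theorem exists_eq_wD_iff_avoids {w : Equiv.Perm (Fin n)} :
    (∃ D : Set (ℕ × ℕ), IsBasic n D ∧ ∀ j : Fin n, ((w j : ℕ) + 1) = wD n D ((j : ℕ) + 1)) ↔
      Avoids w :=
  ⟨fun ⟨_, _, h⟩ => avoids_of_eq_wD h,
    fun h => ⟨exceedances w, isBasic_exceedances w, eq_wD_exceedances_of_avoids h⟩⟩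

theorem Avoids.exists_diagonal_corner {w : Equiv.Perm (Fin n)} (hw : Avoids w) {i j : ℕ}
    (hij : i ≤ j) : ∃ m, i ≤ m ∧ m ≤ j ∧
      (∀ k : Fin n, i ≤ (w k : ℕ) → (w k : ℕ) < m → (k : ℕ) < m) ∧
      ∀ k : Fin n, m ≤ (k : ℕ) → (k : ℕ) < j → i ≤ (w k : ℕ) := by
  have hj : ∃ m, i ≤ m ∧ ∀ k : Fin n, m ≤ (k : ℕ) → (k : ℕ) < j → i ≤ (w k : ℕ) :=
    ⟨j, hij, fun k h h' => absurd h h'.not_ge⟩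
  obtain ⟨him, hcols⟩ := Nat.find_spec hj
  refine ⟨Nat.find hj, him, Nat.find_min' hj ⟨hij, fun k h h' => absurd h h'.not_ge⟩,
    fun k hik hkm => ?_, hcols⟩
  by_contra! hmk
  obtain ⟨l, hl, hlj, hwl⟩ : ∃ l : Fin n, Nat.find hj - 1 ≤ l ∧ (l : ℕ) < j ∧ (w l : ℕ) < i := by
    have := Nat.find_min hj (m := Nat.find hj - 1) (by omega)
    push Not at this
    exact this (by omega)
  have hlm : (l : ℕ) < Nat.find hj := not_le.mp fun h => (hcols l h hlj).not_gt hwl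
  have := hw l k (Fin.lt_def.mpr (by omega)) (Fin.lt_def.mpr (by omega))
  omega

theorem Avoids.exists_add_cornerCount_diagonal_le {w : Equiv.Perm (Fin n)} (hw : Avoids w)
    {i j : ℕ} (hij : i ≤ j) (hj : j ≤ n) :
    ∃ m, i ≤ m ∧ m ≤ j ∧ (m - i) + (j - m) + cornerCount w m m ≤ cornerCount w i j := by
  obtain ⟨m, him, hmj, hrow, hcol⟩ := hw.exists_diagonal_corner hij
  refine ⟨m, him, hmj, ?_⟩
  let rows := Finset.univ.filter fun k : Fin n => i ≤ (w k : ℕ) ∧ (w k : ℕ) < m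
  let cols := Finset.univ.filter fun k : Fin n => m ≤ (k : ℕ) ∧ (k : ℕ) < j
  let diag := Finset.univ.filter fun k : Fin n => m ≤ (w k : ℕ) ∧ (k : ℕ) < m
  have hrows : rows.card = m - i := by
    rw [← card_filter_val_mem_Ico (n := n) (hmj.trans hj), ← Finset.card_map w.toEmbedding]
    congr 1
    ext x
    obtain ⟨k, rfl⟩ := w.surjective x
    simp [rows]
  have hcols : cols.card = j - m := card_filter_val_mem_Ico hj
  have hrc : Disjoint rows cols := Finset.disjoint_left.mpr fun k => by
    simp only [rows, cols, Finset.mem_filter]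
    grind
  have hrcd : Disjoint (rows ∪ cols) diag := Finset.disjoint_left.mpr fun k => by
    simp only [rows, cols, diag, Finset.mem_union, Finset.mem_filter]
    grind
  have hsub : rows ∪ cols ∪ diag ⊆
      Finset.univ.filter fun k : Fin n => i ≤ (w k : ℕ) ∧ (k : ℕ) < j := fun k => by
    simp only [rows, cols, diag, Finset.mem_union, Finset.mem_filter]
    grind
  calc (m - i) + (j - m) + cornerCount w m m = (rows ∪ cols ∪ diag).card := by
        rw [Finset.card_union_of_disjoint hrcd, Finset.card_union_of_disjoint hrc, hrows, hcols,
          cornerCount]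
    _ ≤ cornerCount w i j := Finset.card_le_card hsub

end Avoids

section Cone

variable {n : ℕ} {K : Type} [Field K]

theorem corner_one_of_le {i j : ℕ} (hji : j ≤ i) :
    corner (1 : Matrix (Fin n) (Fin n) K) i j = 0 := by
  ext a b
  rw [corner_apply, Matrix.zero_apply]
  split_ifs with h
  · exact one_apply_ne (by omega)
  · rfl

/- On and below the diagonal the corner rank is constant for `s ≠ 0`, above the diagonal it is at
least the one at `s = 1` for almost all `s`, and at most that by the diagonal corners. -/
theorem Avoids.finite_setOf_smul_notMem_YwCell {w : Equiv.Perm (Fin n)} (hw : Avoids w)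
    {v : PRoot n → K} (hv : v ∈ YwCell n K w) : {s : K | s • v ∉ YwCell n K w}.Finite := by
  set X := matOf n K v with hX
  rw [mem_YwCell_iff_rank_corner, ← hX] at hv
  have hline (s : K) (i j : ℕ) :
      corner (1 + matOf n K (s • v)) i j = corner 1 i j + s • corner X i j := by
    rw [corner_add, matOf_smul, corner_smul]
  have hline₁ (i j : ℕ) : corner (1 + X) i j = corner 1 i j + (1 : K) • corner X i j := by
    rw [corner_add, one_smul]
  have hlower {s : K} (hs : s ≠ 0) {i j : ℕ} (hi : i ≤ n) (hj : j ≤ n) (hji : j ≤ i) :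
      (corner (1 + matOf n K (s • v)) i j).rank = cornerCount w i j := by
    rw [← hv i hi j hj, hline, hline₁, corner_one_of_le hji, zero_add, zero_add, one_smul,
      rank_smul_of_mem_nonZeroDivisors _ (mem_nonZeroDivisors_of_ne_zero hs)]
  have hupper {s : K} (hs : s ≠ 0) {i j : ℕ} (hj : j ≤ n) (hij : i ≤ j) :
      (corner (1 + matOf n K (s • v)) i j).rank ≤ cornerCount w i j := by
    obtain ⟨m, him, hmj, hle⟩ := hw.exists_add_cornerCount_diagonal_le hij hj
    rw [← hlower hs (hmj.trans hj) (hmj.trans hj) le_rfl] at hle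
    exact (rank_corner_le_add_rank_corner_diagonal _ him hmj hj).trans hle
  let bad (p : Fin (n + 1) × Fin (n + 1)) : Set K :=
    {s | (corner 1 p.1 p.2 + s • corner X p.1 p.2).rank <
      (corner 1 p.1 p.2 + (1 : K) • corner X p.1 p.2).rank}
  have hfin : ({0} ∪ ⋃ p, bad p).Finite :=
    (Set.finite_singleton 0).union (Set.finite_iUnion fun p => finite_setOf_rank_add_smul_lt _ _ 1)
  refine hfin.subset fun s hs => ?_
  by_contra hgood
  simp only [Set.mem_union, Set.mem_singleton_iff, Set.mem_iUnion, not_or, not_exists] at hgood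
  refine hs (mem_YwCell_iff_rank_corner.mpr fun i hi j hj => ?_)
  rcases le_total j i with hji | hij
  · exact hlower hgood.1 hi hj hji
  · refine (hupper hgood.1 hj hij).antisymm ?_
    rw [← hv i hi j hj, hline, hline₁]
    exact not_lt.mp (hgood.2 (⟨i, Nat.lt_succ_of_le hi⟩, ⟨j, Nat.lt_succ_of_le hj⟩))

end Cone

/-! ### Generic points of the cells -/

section CofiniteOnLines

variable {K V : Type*} [Field K] [AddCommGroup V] [Module K V]

/-- The property of a subset of a vector space that it contains all but finitely many points of each
parametrized line that it meets. Zariski open sets have this property, which is all that is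
needed to find points in general position. -/
def CofiniteOnLines (K : Type*) {V : Type*} [Field K] [AddCommGroup V] [Module K V]
    (U : Set V) : Prop :=
  ∀ (a b : V) (s₀ : K), a + s₀ • b ∈ U → {s : K | a + s • b ∉ U}.Finite

theorem cofiniteOnLines_setOf_det_ne_zero {ι : Type*} [Fintype ι] [DecidableEq ι]
    {M N : V → Matrix ι ι K} (hM : ∀ a b (s : K), M (a + s • b) = M a + s • N b) :
    CofiniteOnLines K {a | (M a).det ≠ 0} := by
  intro a b s₀ h
  simp only [Set.mem_ofPred_eq, not_not, hM] at h ⊢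
  exact finite_setOf_det_add_smul_eq_zero _ _ h

theorem CofiniteOnLines.sInter {𝒰 : Set (Set V)} (hfin : 𝒰.Finite)
    (h𝒰 : ∀ U ∈ 𝒰, CofiniteOnLines K U) : CofiniteOnLines K (⋂₀ 𝒰) := by
  intro a b s₀ h
  refine (hfin.biUnion fun U hU => h𝒰 U hU a b s₀ (h U hU)).subset fun s hs => ?_
  simpa using hs

theorem CofiniteOnLines.nonempty_inter [Infinite K] {S : Submodule K V} {U U' : Set V}
    (hU : CofiniteOnLines K U) (hU' : CofiniteOnLines K U') (hSU : (↑S ∩ U).Nonempty)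
    (hSU' : (↑S ∩ U').Nonempty) : (↑S ∩ (U ∩ U')).Nonempty := by
  obtain ⟨a, haS, ha⟩ := hSU
  obtain ⟨a', haS', ha'⟩ := hSU'
  have hfin := (hU a (a' - a) 0 (by simpa using ha)).union (hU' a (a' - a) 1 (by simpa using ha'))
  obtain ⟨s, hs⟩ := hfin.infinite_compl.nonempty
  simp only [Set.mem_compl_iff, Set.mem_union, Set.mem_ofPred_eq, not_or, not_not] at hs
  exact ⟨_, S.add_mem haS (S.smul_mem s (S.sub_mem haS' haS)), hs⟩

theorem CofiniteOnLines.nonempty_sInter [Infinite K] {S : Submodule K V} {𝒰 : Set (Set V)}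
    (hfin : 𝒰.Finite) (h𝒰 : ∀ U ∈ 𝒰, CofiniteOnLines K U) (hS : ∀ U ∈ 𝒰, (↑S ∩ U).Nonempty) :
    (↑S ∩ ⋂₀ 𝒰).Nonempty := by
  induction 𝒰, hfin using Set.Finite.induction_on with
  | empty => exact ⟨0, by simp⟩
  | insert _ hfin ih =>
    simp only [Set.forall_mem_insert] at h𝒰 hS
    rw [Set.sInter_insert]
    exact h𝒰.1.nonempty_inter (.sInter hfin h𝒰.2) hS.1 (ih h𝒰.2 hS.2)

end CofiniteOnLines

section Minors

theorem exists_perm_apply_le {ι α : Type*} [Finite ι] [LinearOrder α] {r f : ι → α} {m : α}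
    (hf : Function.Injective f) (hr : ∀ s, r s ≤ m) (h : ∀ s, f s ≤ m → f s ∈ Set.range r) :
    ∃ ρ : Equiv.Perm ι, ∀ s, r (ρ s) ≤ f s := by
  have := Fintype.ofFinite ι
  choose g hg using fun s : {s // f s ≤ m} => h s s.2
  have hinj : Function.Injective g := fun s t hst =>
    Subtype.ext (hf (by rw [← hg s, ← hg t, hst]))
  refine ⟨(Equiv.ofInjective g hinj).extendSubtype, fun s => ?_⟩
  by_cases hs : f s ≤ m
  · rw [Equiv.extendSubtype_apply_of_mem _ s hs, Equiv.ofInjective_apply, hg]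
  · exact (hr _).trans (le_of_not_ge hs)

variable {n : ℕ} {K : Type} [Field K] {ι : Type*} [Fintype ι] [DecidableEq ι]

theorem exists_isUpperTriangular_det_submatrix_ne_zero {r c : ι → Fin n}
    (hr : Function.Injective r) (hc : Function.Injective c) {ρ : Equiv.Perm ι}
    (hρ : ∀ s, r (ρ s) ≤ c s) :
    ∃ b : Matrix (Fin n) (Fin n) K, b.IsUpperTriangular ∧ (b.submatrix r c).det ≠ 0 := by
  refine ⟨of fun x y => if ∃ s, x = r (ρ s) ∧ y = c s then 1 else 0, fun x y hyx => ?_, ?_⟩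
  · refine if_neg ?_
    rintro ⟨s, rfl, rfl⟩
    exact (hρ s).not_gt hyx
  · convert_to ((1 : Matrix ι ι K).submatrix id ρ).det ≠ 0 using 2
    · ext s t
      simp [one_apply, hr.eq_iff, hc.eq_iff]
    · rcases Int.units_eq_one_or (Equiv.Perm.sign ρ) with h | h <;> simp [det_permute', h]

theorem submatrix_mulVec_of_support {R ι m n : Type*} [CommSemiring R] [Fintype n]
    (g : Matrix m n R) (r : ι → m) {p : n → Prop} [DecidablePred p] {z : n → R}
    (hz : ∀ y, ¬ p y → z y = 0) :
    g.submatrix r (Subtype.val : {y // p y} → n) *ᵥ (z ∘ Subtype.val) = (g *ᵥ z) ∘ r := by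
  ext x
  refine Fintype.sum_of_injective _ Subtype.val_injective _ _ (fun y hy => ?_) fun _ => rfl
  rw [hz y (by simpa using hy), mul_zero]

end Minors

section LU

variable {n : ℕ} {K : Type} [Field K]

/-- Lower triangular matrices with ones on the diagonal: the group `1 + 𝔫₋`. -/
def IsLowerUnitriangular (L : Matrix (Fin n) (Fin n) K) : Prop :=
  L.IsLowerTriangular ∧ ∀ x, L x x = 1

theorem one_add_matOf_vecOf {L : Matrix (Fin n) (Fin n) K} (hL : IsLowerUnitriangular L) :
    1 + matOf n K (vecOf n K L) = L := by
  ext x y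
  rw [Matrix.add_apply]
  rcases lt_trichotomy x y with h | rfl | h
  · rw [matOf_apply_of_le _ h.le, hL.1 h, one_apply_ne h.ne, add_zero]
  · rw [matOf_apply_of_le _ le_rfl, hL.2, one_apply_eq, add_zero]
  · rw [one_apply_ne h.ne', zero_add, matOf, dif_pos ⟨by omega, by simpa using h, x.2⟩]
    rfl

/-- The leading principal submatrix of `g`, on the rows and columns with index at most `y`. -/
abbrev leadingSubmatrix (g : Matrix (Fin n) (Fin n) K) (y : Fin n) :
    Matrix {x // x ≤ y} {x // x ≤ y} K :=
  g.submatrix Subtype.val Subtype.val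

theorem exists_inBorel_isLowerUnitriangular_mul {g : Matrix (Fin n) (Fin n) K}
    (hg : ∀ y, (leadingSubmatrix g y).det ≠ 0) :
    ∃ c, InBorel c ∧ IsLowerUnitriangular (g * c) := by
  have hcolumn (y : Fin n) : ∃ z : Fin n → K, (∀ x, y < x → z x = 0) ∧
      ∀ x ≤ y, (g *ᵥ z) x = (Pi.single y 1 : Fin n → K) x := by
    let G := leadingSubmatrix g y
    let e : {x // x ≤ y} → K := Pi.single ⟨y, le_rfl⟩ 1
    let z : Fin n → K := fun x => if h : x ≤ y then (G⁻¹ *ᵥ e) ⟨x, h⟩ else 0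
    have hz (x : Fin n) (hx : ¬ x ≤ y) : z x = 0 := dif_neg hx
    have hz' : z ∘ Subtype.val = G⁻¹ *ᵥ e := funext fun x => dif_pos x.2
    have hGz : (g *ᵥ z) ∘ Subtype.val = e := by
      rw [← submatrix_mulVec_of_support g _ hz, hz', mulVec_mulVec,
        mul_nonsing_inv _ (hg y).isUnit, one_mulVec]
    refine ⟨z, fun x hx => hz x hx.not_ge, fun x hx => ?_⟩
    simpa [e, Pi.single_apply, Subtype.ext_iff] using congrFun hGz ⟨x, hx⟩
  choose z hz hgz using hcolumn
  let c : Matrix (Fin n) (Fin n) K := of fun x y => z y x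
  have hL : IsLowerUnitriangular (g * c) :=
    ⟨fun x y (hxy : x < y) => (hgz y x hxy.le).trans (Pi.single_eq_of_ne hxy.ne 1),
      fun x => (hgz x x le_rfl).trans (Pi.single_eq_same x 1)⟩
  have hdet : (g * c).det = 1 := by
    rw [det_of_isLowerTriangular _ hL.1, Finset.prod_eq_one fun x _ => hL.2 x]
  rw [det_mul] at hdet
  exact ⟨c, ⟨.of_mul_eq_one_right _ hdet, fun x y hyx => hz y x hyx⟩, hL⟩

theorem exists_mul_apply_ne_zero {g c : Matrix (Fin n) (Fin n) K} (hc : InBorel c) {j : Fin n}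
    {r : {x // x ≤ j} → Fin n} (hg : (g.submatrix r Subtype.val).det ≠ 0) :
    ∃ s, (g * c) (r s) j ≠ 0 := by
  by_contra! h
  have hcol := eq_zero_of_mulVec_eq_zero hg (v := c.col j ∘ Subtype.val) <|
    (submatrix_mulVec_of_support g r fun y hy => hc.2 y j (not_le.mp hy)).trans (funext h)
  exact hc.apply_self_ne_zero j (congrFun hcol ⟨j, le_rfl⟩)

end LU

section Transvection

variable {n : ℕ} {K : Type} [Field K]

theorem IsLowerUnitriangular.apply_eq_mul_apply {L N : Matrix (Fin n) (Fin n) K}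
    (hL : IsLowerUnitriangular L) {y : Fin n} (hy : ∀ x < y, (L * N) x y = 0) {x : Fin n}
    (hx : x ≤ y) : N x y = (L * N) x y := by
  induction x using WellFoundedLT.induction with
  | _ x ih =>
  rw [mul_apply, Finset.sum_eq_single x, hL.2, one_mul]
  · intro z _ hzx
    rcases hzx.lt_or_gt with h | h
    · rw [ih z h (h.le.trans hx), hy z (h.trans_le hx), mul_zero]
    · rw [hL.1 h, zero_mul]
  · exact fun h => absurd (Finset.mem_univ x) h

theorem IsLowerUnitriangular.transvection_mul_apply {L : Matrix (Fin n) (Fin n) K}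
    (hL : IsLowerUnitriangular L) (j j' : Fin n) (μ : K) {x y : Fin n} (hxy : x ≤ y) (hy : y ≤ j) :
    (transvection j j' μ * L) x y =
      diagonal (fun z => 1 + if z = j then μ * L j' j else 0) x y := by
  by_cases hx : x = j
  · obtain rfl := hx
    obtain rfl := hxy.antisymm hy
    rw [transvection_mul_apply_same, hL.2, diagonal_apply_eq, if_pos rfl]
  · rw [transvection_mul_apply_of_ne _ _ _ _ hx]
    rcases hxy.eq_or_lt with rfl | hlt
    · rw [hL.2, diagonal_apply_eq, if_neg hx, add_zero]
    · rw [hL.1 hlt, diagonal_apply_ne _ hlt.ne]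

theorem inv_apply_of_transvection {g c c' : Matrix (Fin n) (Fin n) K} (hc : InBorel c)
    (hc' : InBorel c') {j j' : Fin n} {μ : K} (hL : IsLowerUnitriangular (g * c))
    (hL' : IsLowerUnitriangular (transvection j j' μ * g * c')) (x : Fin n) :
    c'⁻¹ x j = c⁻¹ x j + if x = j then μ * (g * c) j' j * c⁻¹ j j else 0 := by
  set T := transvection j j' μ
  let N := c'⁻¹ * c
  have hN : InBorel N := hc'.inv.mul hc
  have hTL : T * g * c' * N = T * (g * c) := by
    simp only [N, Matrix.mul_assoc, mul_nonsing_inv_cancel_left _ _ hc'.1]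
  let d (y : Fin n) : K := 1 + if y = j then μ * (g * c) j' j else 0
  have hN_apply (x : Fin n) {y : Fin n} (hy : y ≤ j) : N x y = diagonal d x y := by
    rcases le_or_gt x y with hxy | hyx
    · rw [← hL.transvection_mul_apply j j' μ hxy hy, ← hTL]
      refine hL'.apply_eq_mul_apply (fun z hz => ?_) hxy
      rw [hTL, hL.transvection_mul_apply j j' μ hz.le hy, diagonal_apply_ne _ hz.ne]
    · rw [hN.2 x y hyx, diagonal_apply_ne _ hyx.ne']
  have hsum : (N * c⁻¹) x j = (diagonal d * c⁻¹) x j := by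
    simp only [mul_apply]
    refine Finset.sum_congr rfl fun y _ => ?_
    rcases le_or_gt y j with hy | hy
    · rw [hN_apply x hy]
    · rw [hc.inv.2 y j hy, mul_zero, mul_zero]
  rw [mul_nonsing_inv_cancel_right _ _ hc.1, diagonal_mul] at hsum
  rw [hsum]
  by_cases hx : x = j
  · simp only [d, hx, if_true]
    ring
  · simp only [d, hx, if_false, add_zero, one_mul]

theorem inBorel_transvection {j j' : Fin n} (hj : j < j') (μ : K) :
    InBorel (transvection j j' μ) :=
  ⟨by rw [det_transvection_of_ne _ _ hj.ne]; exact isUnit_one,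
    fun _ _ hxy => blockTriangular_transvection (b := id) hj.le μ hxy⟩

theorem inv_transvection {j j' : Fin n} (hj : j ≠ j') (μ : K) :
    (transvection j j' μ)⁻¹ = transvection j j' (-μ) :=
  inv_eq_right_inv <| by
    rw [transvection_mul_transvection_same _ _ hj, add_neg_cancel, transvection_zero]

theorem exists_det_leadingSubmatrix_transvection_mul_ne_zero [Infinite K]
    {g : Matrix (Fin n) (Fin n) K} (hg : ∀ y, (leadingSubmatrix g y).det ≠ 0) (j j' : Fin n) :
    ∃ μ ≠ 0, ∀ y, (leadingSubmatrix (transvection j j' μ * g) y).det ≠ 0 := by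
  have hline (μ : K) (y : Fin n) : leadingSubmatrix (transvection j j' μ * g) y =
      leadingSubmatrix g y + μ • leadingSubmatrix (single j j' 1 * g) y := by
    have : transvection j j' μ = 1 + μ • single j j' 1 := by simp [transvection]
    rw [this, Matrix.add_mul, Matrix.one_mul, Matrix.smul_mul]
    rfl
  have hfin (y : Fin n) : {μ | (leadingSubmatrix (transvection j j' μ * g) y).det = 0}.Finite := by
    simp only [hline]
    exact finite_setOf_det_add_smul_eq_zero _ _ (s₀ := 0) (by simpa using hg y)
  obtain ⟨μ, hμ⟩ := ((Set.finite_singleton 0).union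
    (Set.finite_iUnion hfin)).infinite_compl.nonempty
  simp only [Set.mem_compl_iff, Set.mem_union, Set.mem_singleton_iff, Set.mem_iUnion, not_or,
    not_exists] at hμ
  exact ⟨μ, hμ⟩

/- Replacing `b` by `transvection j j' μ * b` changes the entry `(i, j)` of `b⁻¹ * c⁻¹` by a nonzero
multiple of `μ`. -/
theorem exists_inv_mul_inv_apply_ne [Infinite K] {b c g : Matrix (Fin n) (Fin n) K}
    (hb : InBorel b) (hc : InBorel c) (hL : IsLowerUnitriangular (b * g * c))
    (hlead : ∀ y, (leadingSubmatrix (b * g) y).det ≠ 0) {i j j' : Fin n} (hj : j < j')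
    (hentry : (b * g * c) j' j ≠ 0) (hinv : b⁻¹ i j ≠ 0) :
    ∃ b' c', InBorel b' ∧ InBorel c' ∧ IsLowerUnitriangular (b' * g * c') ∧
      (b'⁻¹ * c'⁻¹) i j ≠ (b⁻¹ * c⁻¹) i j := by
  obtain ⟨μ, hμ, hlead'⟩ := exists_det_leadingSubmatrix_transvection_mul_ne_zero hlead j j'
  set T := transvection j j' μ with hT
  obtain ⟨c', hc', hL'⟩ := exists_inBorel_isLowerUnitriangular_mul hlead'
  rw [← Matrix.mul_assoc] at hL'
  refine ⟨T * b, c', (inBorel_transvection hj μ).mul hb, hc', hL', ?_⟩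
  have hTb (x : Fin n) (hx : x ≠ j') : (T * b)⁻¹ i x = b⁻¹ i x := by
    rw [Matrix.mul_inv_rev, hT, inv_transvection hj.ne, mul_transvection_apply_of_ne _ _ _ _ hx]
  have hsum : ((T * b)⁻¹ * c'⁻¹) i j =
      (b⁻¹ * c⁻¹) i j + b⁻¹ i j * (μ * (b * g * c) j' j * c⁻¹ j j) :=
    calc ∑ x, (T * b)⁻¹ i x * c'⁻¹ x j = ∑ x, b⁻¹ i x * c'⁻¹ x j := by
          refine Finset.sum_congr rfl fun x _ => ?_
          by_cases hx : x = j'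
          · rw [hx, hc'.inv.2 j' j hj, mul_zero, mul_zero]
          · rw [hTb x hx]
      _ = _ := by
          simp only [inv_apply_of_transvection hc hc' hL (by rwa [← Matrix.mul_assoc]),
            mul_add, mul_ite, mul_zero, Finset.sum_add_distrib, Finset.sum_ite_eq',
            Finset.mem_univ, if_true]
          rfl
  rw [hsum, ne_eq, add_eq_left]
  exact mul_ne_zero hinv (mul_ne_zero (mul_ne_zero hμ hentry) (hc.inv.apply_self_ne_zero j))

end Transvection

section Generic

variable {n : ℕ} {K : Type} [Field K]

theorem exists_isUpperTriangular_det_leadingSubmatrix_mul_permMat_ne_zero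
    (w : Equiv.Perm (Fin n)) (y : Fin n) :
    ∃ b : Matrix (Fin n) (Fin n) K, b.IsUpperTriangular ∧
      (leadingSubmatrix (b * permMat n K w) y).det ≠ 0 := by
  have hinj : Function.Injective fun s : {x // x ≤ y} => w s :=
    w.injective.comp Subtype.val_injective
  obtain ⟨ρ, hρ⟩ := exists_perm_apply_le (r := Subtype.val) (m := y) hinj (fun s => s.2)
    fun s hs => ⟨⟨w s, hs⟩, rfl⟩
  obtain ⟨b, hb, hdet⟩ :=
    exists_isUpperTriangular_det_submatrix_ne_zero (K := K) Subtype.val_injective hinj hρ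
  exact ⟨b, hb, by rwa [mul_permMat]⟩

theorem exists_isUpperTriangular_det_submatrix_swap_ne_zero {w : Equiv.Perm (Fin n)}
    {j j' k : Fin n} (hj' : (j' : ℕ) = j + 1) (hjk : j < k) (hkj : w k ≤ j) :
    ∃ b : Matrix (Fin n) (Fin n) K, b.IsUpperTriangular ∧
      ((b * permMat n K w).submatrix (fun s : {x // x ≤ j} => Equiv.swap j j' s)
        Subtype.val).det ≠ 0 := by
  have hr : Function.Injective fun s : {x // x ≤ j} => Equiv.swap j j' s :=
    (Equiv.injective _).comp Subtype.val_injective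
  have hf : Function.Injective fun s : {x // x ≤ j} => Equiv.swap (w k) j (w s) :=
    (Equiv.injective _).comp (w.injective.comp Subtype.val_injective)
  have hk (s : {x // x ≤ j}) : w s ≠ w k := fun h => (s.2.trans_lt hjk).ne (w.injective h)
  obtain ⟨ρ, hρ⟩ := exists_perm_apply_le (r := fun s : {x // x ≤ j} => Equiv.swap j j' s)
    (m := j') hf (fun s => by grind) fun s hs => by
      rcases hs.eq_or_lt with h | h
      · exact ⟨⟨j, le_rfl⟩, by simpa using h.symm⟩
      · have hne : Equiv.swap (w k) j (w s) ≠ j := by grind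
        exact ⟨⟨_, by grind⟩, Equiv.swap_apply_of_ne_of_ne hne h.ne⟩
  obtain ⟨b, hb, hdet⟩ := exists_isUpperTriangular_det_submatrix_ne_zero (K := K) hr
    (w.injective.comp Subtype.val_injective) fun s => (hρ s).trans (by grind)
  exact ⟨b, hb, by rwa [mul_permMat]⟩

theorem exists_isUpperTriangular_adjugate_apply_ne_zero {i j : Fin n} (hij : i ≤ j) :
    ∃ b : Matrix (Fin n) (Fin n) K, b.IsUpperTriangular ∧ b.adjugate i j ≠ 0 := by
  rcases hij.eq_or_lt with rfl | hlt
  · exact ⟨1, blockTriangular_one, by simp⟩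
  · refine ⟨transvection i j 1, blockTriangular_transvection hlt.le 1, ?_⟩
    have hinv := inv_transvection hlt.ne (1 : K)
    rw [inv_def, det_transvection_of_ne _ _ hlt.ne, Ring.inverse_one, one_smul] at hinv
    rw [hinv]
    simp [transvection, hlt.ne]

theorem exists_inBorel_generic [Infinite K] {w : Equiv.Perm (Fin n)}
    {j j' k : Fin n} (hj' : (j' : ℕ) = j + 1) (hjk : j < k) (hkj : w k ≤ j) :
    ∃ b : Matrix (Fin n) (Fin n) K, InBorel b ∧
      (∀ y, (leadingSubmatrix (b * permMat n K w) y).det ≠ 0) ∧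
      ((b * permMat n K w).submatrix (fun s : {x // x ≤ j} => Equiv.swap j j' s)
        Subtype.val).det ≠ 0 ∧
      b⁻¹ (w k) j ≠ 0 := by
  let S : Submodule K (Matrix (Fin n) (Fin n) K) :=
    Subalgebra.toSubmodule (blockTriangularSubalgebra K K id)
  let lead (y : Fin n) : Set (Matrix (Fin n) (Fin n) K) :=
    {b | (leadingSubmatrix (b * permMat n K w) y).det ≠ 0}
  let 𝒰 : Set (Set (Matrix (Fin n) (Fin n) K)) :=
    {{b | b.det ≠ 0}, {b | b.adjugate (w k) j ≠ 0},
      {b | ((b * permMat n K w).submatrix (fun s : {x // x ≤ j} => Equiv.swap j j' s)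
        Subtype.val).det ≠ 0}} ∪ Set.range lead
  have hcofinite : ∀ U ∈ 𝒰, CofiniteOnLines K U := by
    rintro U ((rfl | rfl | rfl) | ⟨y, rfl⟩)
    · exact cofiniteOnLines_setOf_det_ne_zero (N := id) fun _ _ _ => rfl
    · simp only [adjugate_apply]
      refine cofiniteOnLines_setOf_det_ne_zero (N := fun b => b.updateRow j 0) fun a b s => ?_
      ext x y
      by_cases hx : x = j <;> simp [hx]
    · simp only [mul_permMat]
      exact cofiniteOnLines_setOf_det_ne_zero fun _ _ _ => rfl
    · simp only [lead, mul_permMat]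
      exact cofiniteOnLines_setOf_det_ne_zero fun _ _ _ => rfl
  have hnonempty : ∀ U ∈ 𝒰, (↑S ∩ U).Nonempty := by
    rintro U ((rfl | rfl | rfl) | ⟨y, rfl⟩)
    · exact ⟨1, blockTriangular_one, by simp⟩
    · exact exists_isUpperTriangular_adjugate_apply_ne_zero hkj
    · exact exists_isUpperTriangular_det_submatrix_swap_ne_zero hj' hjk hkj
    · exact exists_isUpperTriangular_det_leadingSubmatrix_mul_permMat_ne_zero w y
  obtain ⟨b, hbS, hb⟩ := CofiniteOnLines.nonempty_sInter
    ((Set.toFinite _).union (Set.finite_range lead)) hcofinite hnonempty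
  have hdet : b.det ≠ 0 := hb _ (.inl (.inl rfl))
  have hadj : b.adjugate (w k) j ≠ 0 := hb _ (.inl (.inr (.inl rfl)))
  refine ⟨b, ⟨hdet.isUnit, fun x y hyx => hbS hyx⟩, fun y => hb _ (.inr ⟨y, rfl⟩),
    hb _ (.inl (.inr (.inr rfl))), ?_⟩
  rw [inv_def, Matrix.smul_apply, smul_eq_mul, Ring.inverse_eq_inv']
  exact mul_ne_zero (inv_ne_zero hdet) hadj

theorem exists_mem_YwCell_inv_mul_inv_apply_ne_zero [Infinite K] {w : Equiv.Perm (Fin n)}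
    {j k : Fin n} (hjk : j < k) (hkj : w k ≤ j) :
    ∃ v b c, InBorel b ∧ InBorel c ∧ 1 + matOf n K v = b * permMat n K w * c ∧
      (b⁻¹ * c⁻¹) (w k) j ≠ 0 := by
  have hlt : (j : ℕ) + 1 < n := by omega
  obtain ⟨b, hb, hlead, hswap, hinv⟩ :=
    exists_inBorel_generic (K := K) (j' := ⟨j + 1, hlt⟩) rfl hjk hkj
  obtain ⟨c, hc, hL⟩ := exists_inBorel_isLowerUnitriangular_mul hlead
  by_cases h : (b⁻¹ * c⁻¹) (w k) j = 0
  · have hentry : (b * permMat n K w * c) ⟨j + 1, hlt⟩ j ≠ 0 := by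
      obtain ⟨⟨s, hsj⟩, hs⟩ := exists_mul_apply_ne_zero hc hswap
      rcases hsj.eq_or_lt with rfl | hsj
      · rwa [Equiv.swap_apply_left] at hs
      · rw [Equiv.swap_apply_of_ne_of_ne hsj.ne (by grind), hL.1 hsj] at hs
        exact absurd rfl hs
    obtain ⟨b', c', hb', hc', hL', hne⟩ :=
      exists_inv_mul_inv_apply_ne hb hc hL hlead (Nat.lt_succ_self j) hentry hinv
    exact ⟨_, b', c', hb', hc', one_add_matOf_vecOf hL', by rwa [h] at hne⟩
  · exact ⟨_, b, c, hb, hc, one_add_matOf_vecOf hL, h⟩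

end Generic

/-! ### Avoidance from homogeneity -/

section Necessity

variable {n : ℕ} {K : Type} [Field K]

theorem exists_eval_eq_det {ι : Type*} [Fintype ι] [DecidableEq ι] (A : Matrix ι (Fin n) K)
    (B : Matrix (Fin n) ι K) : ∃ f : MvPolynomial (PRoot n) K,
      ∀ v, MvPolynomial.eval v f = (A * (1 + matOf n K v) * B).det := by
  let G : Matrix (Fin n) (Fin n) (MvPolynomial (PRoot n) K) := 1 + of fun a b : Fin n =>
    if h : IsPosRoot n ((a : ℕ) + 1, (b : ℕ) + 1) then MvPolynomial.X ⟨_, h⟩ else 0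
  let C : K →+* MvPolynomial (PRoot n) K := MvPolynomial.C
  refine ⟨(A.map C * G * B.map C).det, fun v => ?_⟩
  have hG : G.map (MvPolynomial.eval v) = 1 + matOf n K v := by
    ext a b
    simp only [G, map_apply, Matrix.add_apply, one_apply, of_apply, matOf, map_add]
    congr 1 <;> split_ifs <;> simp
  rw [RingHom.map_det, RingHom.mapMatrix_apply, Matrix.map_mul, Matrix.map_mul, hG]
  congr 3 <;> ext <;> simp [C]

theorem exists_forall_corner_eq_mul_mul (i j : ℕ) : ∃ E F : Matrix (Fin n) (Fin n) K,
    ∀ g, corner g i j = E * g * F := by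
  refine ⟨diagonal fun a => if i ≤ (a : ℕ) then 1 else 0,
    diagonal fun b => if (b : ℕ) < j then 1 else 0, fun g => ?_⟩
  ext a b
  rw [mul_diagonal, diagonal_mul, corner_apply]
  split_ifs <;> simp_all

/- Were the rank of the corner larger than on the cell, a minor of the corner would be nonzero at
`v` and vanish on the cell. -/
theorem rank_corner_le_of_forall_eval_eq_zero {w : Equiv.Perm (Fin n)} {v : PRoot n → K}
    (hv : ∀ f ∈ vanishing (PRoot n) K (YwCell n K w), MvPolynomial.eval v f = 0) (i j : ℕ) :
    (corner (1 + matOf n K v) i j).rank ≤ cornerCount w i j := by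
  by_contra! hlt
  obtain ⟨P, Q, hPQ⟩ := exists_mul_mul_eq_one (corner (1 + matOf n K v) i j)
  obtain ⟨E, F, hEF⟩ := exists_forall_corner_eq_mul_mul (n := n) (K := K) i j
  obtain ⟨f, hf⟩ := exists_eval_eq_det (P * E) (F * Q)
  replace hf (u) : MvPolynomial.eval u f = (P * corner (1 + matOf n K u) i j * Q).det := by
    simp only [hf, hEF (1 + matOf n K u), Matrix.mul_assoc]
  have hfv : MvPolynomial.eval v f = 1 := by rw [hf, hPQ, det_one]
  refine zero_ne_one ((hv f fun u hu => ?_).symm.trans hfv)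
  by_contra hne
  rw [hf] at hne
  obtain ⟨b, c, hb, hc, hbc⟩ := hu
  have hcard := card_le_rank_of_det_mul_mul_ne_zero hne
  rw [hbc, rank_corner_borel_mul_borel hb hc, rank_corner_permMat, Fintype.card_fin] at hcard
  exact hcard.not_gt hlt

theorem inv_mul_inv_apply_eq_zero_of_forall_eval_smul [Infinite K] {w : Equiv.Perm (Fin n)}
    {v : PRoot n → K} {b c : Matrix (Fin n) (Fin n) K} (hb : InBorel b) (hc : InBorel c)
    (hbc : 1 + matOf n K v = b * permMat n K w * c)
    (hv : ∀ f ∈ vanishing (PRoot n) K (YwCell n K w), ∀ s : K, MvPolynomial.eval (s • v) f = 0)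
    {j k : Fin n} (hjk : j < k) (hw : w j < w k) : (b⁻¹ * c⁻¹) (w k) j = 0 := by
  have hline (s : K) : 1 + matOf n K (s • v) =
      b * (s • permMat n K w + (1 - s) • (b⁻¹ * c⁻¹)) * c := by
    have hone : b * (b⁻¹ * c⁻¹) * c = 1 := by
      rw [mul_nonsing_inv_cancel_left _ _ hb.1, nonsing_inv_mul _ hc.1]
    rw [Matrix.mul_add, Matrix.add_mul, Matrix.mul_smul, Matrix.mul_smul, Matrix.smul_mul,
      Matrix.smul_mul, ← hbc, hone, matOf_smul]
    module
  have hrank (s : K) : (s • corner (permMat n K w) (w k) (j + 1) +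
      (1 - s) • corner (b⁻¹ * c⁻¹) (w k) (j + 1)).rank ≤ cornerCount w (w k) (j + 1) := by
    rw [← corner_smul, ← corner_smul, ← corner_add, ← rank_corner_borel_mul_borel hb hc, ← hline]
    exact rank_corner_le_of_forall_eval_eq_zero (fun f hf => hv f hf s) _ _
  have hzero {x y : Fin n} (hxy : x ≠ w y) : corner (permMat n K w) (w k) (j + 1) x y = 0 := by
    rw [corner_apply, permMat, if_neg hxy, ite_self]
  have hcorner := apply_eq_zero_of_rank_le (A := corner (permMat n K w) (w k) (j + 1))
    (U := corner (b⁻¹ * c⁻¹) (w k) (j + 1)) (i := w k) (j := j)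
    (ρ := fun l : {l : Fin n // (w k : ℕ) ≤ w l ∧ (l : ℕ) < j + 1} => w l) (γ := Subtype.val)
    ?_ (fun l => hzero (w.injective.ne (by grind))) (fun l => hzero (by grind)) (hzero hw.ne')
    (by simpa only [Fintype.card_subtype, cornerCount] using hrank)
  · rwa [corner_apply, if_pos ⟨le_rfl, Nat.lt_succ_self _⟩] at hcorner
  · ext l l'
    rw [submatrix_apply, corner_apply, if_pos ⟨l.2.1, l'.2.2⟩]
    simp only [permMat, one_apply, EmbeddingLike.apply_eq_iff_eq, Subtype.ext_iff]

theorem avoids_of_forall_homogeneousComponent_mem [Infinite K] {w : Equiv.Perm (Fin n)}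
    (h : ∀ f ∈ vanishing (PRoot n) K (YwCell n K w), ∀ d : ℕ,
      MvPolynomial.homogeneousComponent d f ∈ vanishing (PRoot n) K (YwCell n K w)) :
    Avoids w := by
  intro j k hjk hw
  by_contra! hkj
  obtain ⟨v, b, c, hb, hc, hbc, hne⟩ :=
    exists_mem_YwCell_inv_mul_inv_apply_ne_zero (K := K) hjk hkj
  exact hne <| inv_mul_inv_apply_eq_zero_of_forall_eval_smul hb hc hbc
    (fun f hf => eval_smul_eq_zero_of_homogeneousComponent_mem (h f hf) ⟨b, c, hb, hc, hbc⟩) hjk hw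

end Necessity

end BruhatCone

theorem stmt4_general (n : ℕ) (K : Type) [Field K] [Infinite K] (w : Equiv.Perm (Fin n)) :
    (∀ f ∈ vanishing (PRoot n) K (YwCell n K w), ∀ d : ℕ,
      MvPolynomial.homogeneousComponent d f ∈ vanishing (PRoot n) K (YwCell n K w)) ↔
    ∃ D : Set (ℕ × ℕ), IsBasic n D ∧
      ∀ j : Fin n, ((w j : ℕ) + 1) = wD n D ((j : ℕ) + 1) := by
  rw [BruhatCone.exists_eq_wD_iff_avoids]
  exact ⟨BruhatCone.avoids_of_forall_homogeneousComponent_mem, fun hw f hf d =>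
    BruhatCone.homogeneousComponent_mem_vanishing
      (fun _ => hw.finite_setOf_smul_notMem_YwCell) hf d⟩

/-- the vanishing ideal of `Y_w^∘` in `K[x_γ : γ ∈ Δ⁺]` is
homogeneous (contains every homogeneous component of each of its elements,
i.e. `Y_w` is a cone with center the origin) iff `w = w_D` for some basic
subset `D ⊆ Δ⁺`. -/
theorem stmt4 (n : ℕ) (hn : 2 ≤ n) (K : Type) [Field K] [CharZero K]
    (w : Equiv.Perm (Fin n)) :
    (∀ f ∈ vanishing (PRoot n) K (YwCell n K w), ∀ d : ℕ,
      MvPolynomial.homogeneousComponent d f ∈ vanishing (PRoot n) K (YwCell n K w)) ↔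
    ∃ D : Set (ℕ × ℕ), IsBasic n D ∧
      ∀ j : Fin n, ((w j : ℕ) + 1) = wD n D ((j : ℕ) + 1) := by
  have := CharZero.infinite K
  exact stmt4_general n K w
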